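/- Let α, β be partitions of n, let π be uniform on the conjugacy class C_α and σ independently uniform on C_β, and suppose all permutations in C_α·C_β are even. Let P_{α,β} be the distribution of πσ and U_{A_n} the uniform distribution on the alternating group A_n. Then ||P_{α,β} - U_{A_n}||² ≤ (1/4) Σ_{λ ≠ (n), (1^n)} ( χ^λ(α) χ^λ(β) / f^λ )². -/

import Mathlib

/-!
The inequality is Cauchy-Schwarz on `S_n` followed by Plancherel's formula for class functions.

Put `F = P - U`, a real class function. Cauchy-Schwarz gives `(∑ |F|)² ≤ n! ∑ F²`, and
Plancherel's formula (`card_mul_sum_mul_inv`) evaluates the right-hand side as `∑ mᵢ²`, where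
`mᵢ = ∑ F χᵢ`; every permutation is conjugate to its inverse, so the bilinear form
`∑ F(g) F(g⁻¹)` of that formula is `∑ F²`. By Schur's lemma, `∑ P χᵢ = χᵢ(α) χᵢ(β) / fᵢ`
(`sum_sum_character_mul`). Since `U` is a multiple of `1 + sign`, orthogonality of characters gives
`∑ U χᵢ = 0` unless `i` is the trivial or the sign representation, and in these two cases
`mᵢ = 1 - 1 = 0`, because both `P` and `U` are probability measures on even permutations.

Plancherel's formula needs the irreducible characters to separate class functions
(`eq_zero_of_forall_sum_character_eq_zero`). If a class function `F` is orthogonal to all of them,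
then `∑ F(g) ρ(g)` is a scalar of trace zero, hence zero, on each irreducible representation, hence
zero on every representation by Maschke's theorem; on the regular representation this forces
`F = 0`.
-/

open Finset CategoryTheory

/-! ### Class functions on a finite group -/

section ClassFunctions

variable {G : Type} [Group G] [Fintype G]

/-- Schur's lemma for the operator `∑ F(g) ρ(g)` of a class function `F`: on a simple
representation it is a scalar. -/
lemma exists_smul_id_of_classFunction (V : FDRep ℂ G) [Simple V] (F : G → ℂ)
    (hF : ∀ g h, F (h * g * h⁻¹) = F g) :
    ∃ c : ℂ, ∑ g, F g • V.ρ g = c • LinearMap.id := by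
  set T : V →ₗ[ℂ] V := ∑ g, F g • V.ρ g with hT
  have hcomm : ∀ h, T ∘ₗ V.ρ h = V.ρ h ∘ₗ T := by
    intro h
    change T * V.ρ h = V.ρ h * T
    rw [hT, Finset.sum_mul, Finset.mul_sum]
    refine Fintype.sum_equiv (MulAut.conj h⁻¹).toEquiv _ _ fun g => ?_
    have h1 := hF g h⁻¹
    rw [inv_inv] at h1
    simp only [smul_mul_assoc, mul_smul_comm, ← map_mul, MulEquiv.toEquiv_eq_coe,
      MulEquiv.coe_toEquiv, MulAut.conj_apply, inv_inv, h1]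
    congr 2
    group
  let f : V ⟶ V := ⟨InducedCategory.homMk (ModuleCat.ofHom T), fun h => by
    ext x
    exact congrArg (fun L : V →ₗ[ℂ] V => L x) (hcomm h)⟩
  obtain ⟨c, hc⟩ := endomorphism_simple_eq_smul_id ℂ f
  refine ⟨c, ?_⟩
  have h2 : (f.hom.hom.hom : V →ₗ[ℂ] V) = (c • 𝟙 V : V ⟶ V).hom.hom.hom := by rw [hc]
  exact h2

lemma trace_sum_smul (V : FDRep ℂ G) (F : G → ℂ) :
    LinearMap.trace ℂ V (∑ g, F g • V.ρ g) = ∑ g, F g * V.character g := by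
  simp [FDRep.character, map_sum]

lemma sum_smul_eq_zero_of_simple (V : FDRep ℂ G) [Simple V] (F : G → ℂ)
    (hF : ∀ g h, F (h * g * h⁻¹) = F g) (h0 : ∑ g, F g * V.character g = 0) :
    ∑ g, F g • V.ρ g = 0 := by
  obtain ⟨c, hc⟩ := exists_smul_id_of_classFunction V F hF
  rw [← trace_sum_smul, hc, map_smul, LinearMap.trace_id, smul_eq_mul, mul_eq_zero] at h0
  rw [hc]
  rcases h0 with h0 | h0
  · rw [h0, zero_smul]
  · have : Subsingleton V := Module.finrank_zero_iff.1 (by exact_mod_cast h0)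
    ext x
    exact Subsingleton.elim _ _

/-- The normalised character is multiplicative on the centre of the group algebra. -/
lemma sum_sum_character_mul (V : FDRep ℂ G) [Simple V] (E H : G → ℂ)
    (hE : ∀ g h, E (h * g * h⁻¹) = E g) (hH : ∀ g h, H (h * g * h⁻¹) = H g) :
    ∑ a, ∑ b, E a * H b * V.character (a * b) =
      (∑ a, E a * V.character a) * (∑ b, H b * V.character b) /
        (Module.finrank ℂ V : ℂ) := by
  obtain ⟨c, hc⟩ := exists_smul_id_of_classFunction V E hE
  obtain ⟨d, hd⟩ := exists_smul_id_of_classFunction V H hH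
  have h1 : LinearMap.trace ℂ V ((∑ a, E a • V.ρ a) * ∑ b, H b • V.ρ b) =
      ∑ a, ∑ b, E a * H b * V.character (a * b) := by
    rw [Finset.sum_mul_sum]
    simp [FDRep.character, map_sum, mul_assoc, mul_left_comm]
  have h2 : ((c • LinearMap.id : V →ₗ[ℂ] V) * (d • LinearMap.id : V →ₗ[ℂ] V)) =
      (c * d) • LinearMap.id := by
    ext x; simp [smul_smul, mul_comm]
  rw [← h1, ← trace_sum_smul, ← trace_sum_smul, hc, hd, h2]
  simp only [map_smul, LinearMap.trace_id, smul_eq_mul]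
  by_cases hf : (Module.finrank ℂ V : ℂ) = 0
  · simp [hf]
  · field_simp

lemma simple_of_isIrreducible {W : Type} [AddCommGroup W] [Module ℂ W] [FiniteDimensional ℂ W]
    (ρ : Representation ℂ G W) [ρ.IsIrreducible] : Simple (FDRep.of ρ) := by
  rw [FDRep.simple_iff_char_is_norm_one]
  have : Invertible (Nat.card G : ℂ) := invertibleOfNonzero (NeZero.ne _)
  have h := Representation.char_orthonormal ρ ρ
  rw [if_pos ⟨Representation.Equiv.refl ρ⟩, inv_mul_eq_one₀ (NeZero.ne _)] at h
  exact h.symm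

/-- A class function whose operator vanishes on every irreducible representation acts as zero
on every representation, by complete reducibility. -/
lemma sum_smul_eq_zero {ι : Type} (V : ι → FDRep ℂ G)
    (hcomplete : ∀ W : FDRep ℂ G, Simple W → ∃ i, Nonempty (W ≅ V i))
    (F : G → ℂ) (hF : ∀ g h, F (h * g * h⁻¹) = F g)
    (h0 : ∀ i, ∑ g, F g * (V i).character g = 0) (n : ℕ) :
    ∀ {W : Type} [AddCommGroup W] [Module ℂ W] [FiniteDimensional ℂ W]
      (ρ : Representation ℂ G W), Module.finrank ℂ W = n → ∑ g, F g • ρ g = 0 := by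
  induction n using Nat.strong_induction_on with
  | _ n ih =>
  intro W _ _ _ ρ hn
  rcases subsingleton_or_nontrivial W with hW | hW
  · ext x
    exact Subsingleton.elim _ _
  by_cases hirr : ρ.IsIrreducible
  · have hs := simple_of_isIrreducible ρ
    obtain ⟨i, ⟨e⟩⟩ := hcomplete _ hs
    exact sum_smul_eq_zero_of_simple (FDRep.of ρ) F hF (by rw [FDRep.char_iso e]; exact h0 i)
  -- the operator vanishes on a proper subrepresentation, by the induction hypothesis
  have key : ∀ σ : Subrepresentation ρ, σ ≠ ⊤ → ∀ x ∈ σ.toSubmodule,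
      (∑ g, F g • ρ g) x = 0 := by
    intro σ hσ x hx
    have hlt : σ.toSubmodule < ⊤ :=
      lt_top_iff_ne_top.2 fun h => hσ (Subrepresentation.toSubmodule_injective h)
    have h1 := ih _ (hn ▸ Submodule.finrank_lt hlt.ne) σ.toRepresentation rfl
    have h2 := congrArg (fun L : Module.End ℂ σ.toSubmodule => (L ⟨x, hx⟩ : W)) h1
    simpa [Subrepresentation.toRepresentation, LinearMap.sum_apply] using h2
  have hex : ∃ σ : Subrepresentation ρ, σ ≠ ⊥ ∧ σ ≠ ⊤ := by
    by_contra! hcon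
    have : Nontrivial (Subrepresentation ρ) := ⟨⊥, ⊤, fun h => by
      have : (⊥ : Submodule ℂ W) = ⊤ := congrArg Subrepresentation.toSubmodule h
      exact bot_ne_top this⟩
    exact hirr ⟨fun σ => or_iff_not_imp_left.2 (hcon σ)⟩
  obtain ⟨σ, hσ0, hσ1⟩ := hex
  have hss : ρ.IsSemisimpleRepresentation := inferInstance
  obtain ⟨τ, hτ⟩ := exists_isCompl σ
  have hτ1 : τ ≠ ⊤ := by
    rintro rfl
    exact hσ0 (by simpa using hτ.inf_eq_bot)
  have hsup : σ.toSubmodule ⊔ τ.toSubmodule = ⊤ :=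
    congrArg Subrepresentation.toSubmodule hτ.sup_eq_top
  ext x
  have hx : x ∈ σ.toSubmodule ⊔ τ.toSubmodule := hsup ▸ Submodule.mem_top
  obtain ⟨y, hy, z, hz, rfl⟩ := Submodule.mem_sup.1 hx
  rw [map_add, key σ hσ1 y hy, key τ hτ1 z hz]
  simp

/-- The irreducible characters separate class functions. -/
lemma eq_zero_of_forall_sum_character_eq_zero {ι : Type} (V : ι → FDRep ℂ G)
    (hcomplete : ∀ W : FDRep ℂ G, Simple W → ∃ i, Nonempty (W ≅ V i))
    (F : G → ℂ) (hF : ∀ g h, F (h * g * h⁻¹) = F g)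
    (h0 : ∀ i, ∑ g, F g * (V i).character g = 0) : F = 0 := by
  classical
  have h := sum_smul_eq_zero V hcomplete F hF h0 _ (Representation.leftRegular ℂ G) rfl
  ext g
  -- a combination of group elements acts faithfully on the unit of the group algebra
  have h1 := congrArg
    (fun L : Module.End ℂ (MonoidAlgebra ℂ G) => (L (MonoidAlgebra.single 1 1)).coeff g) h
  simpa [LinearMap.sum_apply, Representation.leftRegular, Representation.ofMulAction_single,
    MonoidAlgebra.coeff_sum, Finsupp.single_apply] using h1

lemma sum_character_mul_inv {ι : Type} [DecidableEq ι] (V : ι → FDRep ℂ G)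
    (hsimple : ∀ i, Simple (V i)) (hdistinct : ∀ i j, Nonempty (V i ≅ V j) → i = j) (i j : ι) :
    ∑ g, (V i).character g * (V j).character g⁻¹ =
      if i = j then (Fintype.card G : ℂ) else 0 := by
  classical
  have : Invertible (Nat.card G : ℂ) := invertibleOfNonzero (NeZero.ne _)
  have := hsimple i
  have := hsimple j
  have h := FDRep.char_orthonormal (V i) (V j)
  rw [inv_mul_eq_iff_eq_mul₀ (NeZero.ne _)] at h
  rw [h, Nat.card_eq_fintype_card]
  by_cases hij : i = j
  · subst hij
    simp [Nonempty.intro (Iso.refl (V i))]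
  · rw [if_neg hij, if_neg fun hn => hij (hdistinct i j hn), mul_zero]

/-- Plancherel's formula for class functions, in bilinear form. -/
lemma card_mul_sum_mul_inv {ι : Type} [Fintype ι] [DecidableEq ι] (V : ι → FDRep ℂ G)
    (hsimple : ∀ i, Simple (V i))
    (hcomplete : ∀ W : FDRep ℂ G, Simple W → ∃ i, Nonempty (W ≅ V i))
    (hdistinct : ∀ i j, Nonempty (V i ≅ V j) → i = j)
    (F : G → ℂ) (hF : ∀ g h, F (h * g * h⁻¹) = F g) :
    (Fintype.card G : ℂ) * ∑ g, F g * F g⁻¹ = ∑ i, (∑ g, F g * (V i).character g) ^ 2 := by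
  have hG : (Fintype.card G : ℂ) ≠ 0 := by simp
  set m : ι → ℂ := fun i => ∑ g, F g * (V i).character g with hm
  have hexp : (fun g => (Fintype.card G : ℂ) * F g - ∑ i, m i * (V i).character g⁻¹) = 0 := by
    refine eq_zero_of_forall_sum_character_eq_zero V hcomplete _ ?_ ?_
    · intro g h
      have hc : ∀ i, (V i).character (h * g * h⁻¹)⁻¹ = (V i).character g⁻¹ := by
        intro i
        rw [← FDRep.char_conj (V i) g⁻¹ h]
        congr 1
        group
      simp only [hF, hc]
    · intro j
      have h1 : ∑ g, (∑ i, m i * (V i).character g⁻¹) * (V j).character g =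
          ∑ i, m i * ∑ g, (V j).character g * (V i).character g⁻¹ := by
        simp only [Finset.sum_mul, Finset.mul_sum]
        rw [Finset.sum_comm]
        exact Finset.sum_congr rfl fun i _ => Finset.sum_congr rfl fun g _ => by ring
      simp only [sub_mul, Finset.sum_sub_distrib, h1,
        sum_character_mul_inv V hsimple hdistinct, mul_assoc, ← Finset.mul_sum]
      simp [hm, mul_comm]
  have hexp' : ∀ g, (Fintype.card G : ℂ) * F g⁻¹ = ∑ i, m i * (V i).character g := by
    intro g
    have := congrFun hexp g⁻¹
    simpa [sub_eq_zero] using this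
  calc (Fintype.card G : ℂ) * ∑ g, F g * F g⁻¹
      = ∑ g, F g * ((Fintype.card G : ℂ) * F g⁻¹) := by
        rw [Finset.mul_sum]
        exact Finset.sum_congr rfl fun g _ => by ring
    _ = ∑ i, m i ^ 2 := by
        simp only [hexp', Finset.mul_sum]
        rw [Finset.sum_comm]
        refine Finset.sum_congr rfl fun i _ => ?_
        rw [sq]
        nth_rewrite 3 [hm]
        rw [Finset.mul_sum]
        exact Finset.sum_congr rfl fun g _ => by ring

end ClassFunctions

/-! ### Products of two conjugacy classes of permutations -/

section Perm

variable {n : ℕ}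

lemma character_eq_of_cycleType_eq (V : FDRep ℂ (Equiv.Perm (Fin n))) {a b : Equiv.Perm (Fin n)}
    (h : a.cycleType = b.cycleType) : V.character a = V.character b := by
  obtain ⟨c, hc⟩ := isConj_iff.1 (Equiv.Perm.isConj_iff_cycleType_eq.2 h)
  rw [← hc, FDRep.char_conj]

/-- The Fourier coefficient of the distribution of a product of two independent uniform elements
of conjugacy classes. -/
lemma sum_product_distribution_mul_character (V : FDRep ℂ (Equiv.Perm (Fin n))) [Simple V]
    (π₀ σ₀ : Equiv.Perm (Fin n)) (Ca Cb : Finset (Equiv.Perm (Fin n)))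
    (hCa : Ca = Finset.univ.filter fun x => x.cycleType = π₀.cycleType)
    (hCb : Cb = Finset.univ.filter fun x => x.cycleType = σ₀.cycleType) :
    ∑ ω, ((((Ca ×ˢ Cb).filter fun p => p.1 * p.2 = ω).card : ℂ) /
        ((Ca.card : ℂ) * (Cb.card : ℂ))) * V.character ω =
      V.character π₀ * V.character σ₀ / (Module.finrank ℂ V : ℂ) := by
  have hca : (Ca.card : ℂ) ≠ 0 := by
    rw [Nat.cast_ne_zero, Finset.card_ne_zero]
    exact ⟨π₀, by simp [hCa]⟩
  have hcb : (Cb.card : ℂ) ≠ 0 := by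
    rw [Nat.cast_ne_zero, Finset.card_ne_zero]
    exact ⟨σ₀, by simp [hCb]⟩
  have hsum : ∀ (C : Finset (Equiv.Perm (Fin n))) (τ : Equiv.Perm (Fin n)),
      C = Finset.univ.filter (fun x => x.cycleType = τ.cycleType) →
      ∑ a, (if a ∈ C then (1 : ℂ) else 0) * V.character a = C.card * V.character τ := by
    intro C τ hC
    simp only [ite_mul, one_mul, zero_mul, Finset.sum_ite_mem, Finset.univ_inter]
    rw [← nsmul_eq_mul]
    refine Finset.sum_eq_card_nsmul fun a ha => character_eq_of_cycleType_eq V ?_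
    simpa [hC] using ha
  have hmain := sum_sum_character_mul V (fun a => if a ∈ Ca then (1 : ℂ) else 0)
    (fun a => if a ∈ Cb then (1 : ℂ) else 0)
    (by intro g h; simp [hCa, Equiv.Perm.cycleType_conj])
    (by intro g h; simp [hCb, Equiv.Perm.cycleType_conj])
  rw [hsum Ca π₀ hCa, hsum Cb σ₀ hCb] at hmain
  have hcount : ∑ ω, (((Ca ×ˢ Cb).filter fun p => p.1 * p.2 = ω).card : ℂ) * V.character ω =
      ∑ a, ∑ b, (if a ∈ Ca then (1 : ℂ) else 0) * (if b ∈ Cb then (1 : ℂ) else 0) *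
        V.character (a * b) := by
    have h1 : ∑ a, ∑ b, (if a ∈ Ca then (1 : ℂ) else 0) * (if b ∈ Cb then (1 : ℂ) else 0) *
        V.character (a * b) = ∑ p ∈ Ca ×ˢ Cb, V.character (p.1 * p.2) := by
      rw [Finset.sum_product]
      simp [Finset.sum_ite_mem]
    rw [h1, ← Finset.sum_fiberwise (Ca ×ˢ Cb) (fun p => p.1 * p.2)]
    refine Finset.sum_congr rfl fun ω _ => ?_
    rw [← nsmul_eq_mul, Finset.sum_congr rfl (g := fun _ => V.character ω), Finset.sum_const]
    intro p hp
    rw [(Finset.mem_filter.1 hp).2]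
  simp only [div_mul_eq_mul_div]
  rw [← Finset.sum_div, hcount, hmain]
  field_simp

end Perm

/-- Let `α, β` be partitions of `n` (given by representatives
`π₀, σ₀`), let `π` be uniform on `C_α` and `σ` independently uniform on `C_β`, and
suppose all permutations in `C_α · C_β` are even.  Let `P_{α,β}` be the
distribution of `πσ` and `U_{A_n}` the uniform distribution on the alternating
group.  Then `‖P_{α,β} - U_{A_n}‖² ≤ (1/4) ∑_{λ ≠ (n), (1ⁿ)} (χ^λ(α)χ^λ(β)/f^λ)²`,
where the sum runs over a complete family `(V i)` of pairwise non-isomorphic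
irreducible representations of `S_n`, omitting the trivial (`i₀`) and sign (`i₁`)
representations. -/
theorem tv_class_product_le_char_sum
    (n : ℕ) {ι : Type} [Fintype ι] [DecidableEq ι]
    (V : ι → FDRep ℂ (Equiv.Perm (Fin n)))
    (hsimple : ∀ i, Simple (V i))
    (hcomplete : ∀ W : FDRep ℂ (Equiv.Perm (Fin n)), Simple W →
      ∃ i, Nonempty (W ≅ V i))
    (hdistinct : ∀ i j, Nonempty (V i ≅ V j) → i = j)
    (i₀ i₁ : ι)
    (h₀ : (V i₀).character = fun _ => 1)
    (h₁ : (V i₁).character = fun g => ((Equiv.Perm.sign g : ℤ) : ℂ))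
    (π₀ σ₀ : Equiv.Perm (Fin n))
    (heven : ∀ π σ : Equiv.Perm (Fin n), π.cycleType = π₀.cycleType →
      σ.cycleType = σ₀.cycleType → Equiv.Perm.sign (π * σ) = 1) :
    -- the conjugacy classes `C_α` and `C_β`
    let Ca : Finset (Equiv.Perm (Fin n)) :=
      Finset.univ.filter fun x => x.cycleType = π₀.cycleType
    let Cb : Finset (Equiv.Perm (Fin n)) :=
      Finset.univ.filter fun x => x.cycleType = σ₀.cycleType
    -- the distribution of the product `πσ`
    let P : Equiv.Perm (Fin n) → ℝ := fun ω =>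
      (((Ca ×ˢ Cb).filter fun p => p.1 * p.2 = ω).card : ℝ) /
        ((Ca.card : ℝ) * (Cb.card : ℝ))
    -- the uniform distribution on the alternating group `A_n`
    let U : Equiv.Perm (Fin n) → ℝ := fun ω =>
      if Equiv.Perm.sign ω = 1 then
        ((Finset.univ.filter fun τ : Equiv.Perm (Fin n) =>
          Equiv.Perm.sign τ = 1).card : ℝ)⁻¹
      else 0
    ((1 / 2) * ∑ ω : Equiv.Perm (Fin n), |P ω - U ω|) ^ 2
      ≤ (1 / 4) * ∑ i ∈ Finset.univ \ {i₀, i₁},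
          ‖(V i).character π₀ * (V i).character σ₀ /
            (Module.finrank ℂ (V i) : ℂ)‖ ^ 2 := by
  intro Ca Cb P U
  set A : ℕ := (Finset.univ.filter fun τ : Equiv.Perm (Fin n) => Equiv.Perm.sign τ = 1).card
    with hA
  have hA0 : (A : ℂ) ≠ 0 := by
    rw [Nat.cast_ne_zero, hA, Finset.card_ne_zero]
    exact ⟨1, by simp⟩
  let F : Equiv.Perm (Fin n) → ℂ := fun ω => ((P ω - U ω : ℝ) : ℂ)
  have hP : ∀ i, ∑ ω, ((P ω : ℝ) : ℂ) * (V i).character ω =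
      (V i).character π₀ * (V i).character σ₀ / (Module.finrank ℂ (V i) : ℂ) := by
    intro i
    have := hsimple i
    rw [← sum_product_distribution_mul_character (V i) π₀ σ₀ Ca Cb rfl rfl]
    refine Finset.sum_congr rfl fun ω _ => ?_
    simp only [P]
    push_cast
    rfl
  have hUsum : ∑ ω, ((U ω : ℝ) : ℂ) = 1 := by
    simp only [U]
    rw [← Complex.ofReal_sum, ← Finset.sum_filter, Finset.sum_const, nsmul_eq_mul]
    push_cast
    exact mul_inv_cancel₀ hA0
  have hUsign : ∀ ω, ((U ω : ℝ) : ℂ) * ((Equiv.Perm.sign ω : ℤ) : ℂ) = ((U ω : ℝ) : ℂ) := by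
    intro ω
    simp only [U]
    split_ifs with h <;> simp [h]
  have hU : ∀ i, i ≠ i₀ → i ≠ i₁ → ∑ ω, ((U ω : ℝ) : ℂ) * (V i).character ω = 0 := by
    intro i hi0 hi1
    have e0 := sum_character_mul_inv V hsimple hdistinct i i₀
    have e1 := sum_character_mul_inv V hsimple hdistinct i i₁
    rw [if_neg hi0, h₀] at e0
    rw [if_neg hi1, h₁] at e1
    -- the uniform measure on even permutations is `(1 + sign) / (2 |A_n|)`
    have hform : ∀ ω, ((U ω : ℝ) : ℂ) * (V i).character ω = (2 * (A : ℂ))⁻¹ *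
        ((V i).character ω * 1 + (V i).character ω * ((Equiv.Perm.sign ω⁻¹ : ℤ) : ℂ)) := by
      intro ω
      rcases Int.units_eq_one_or (Equiv.Perm.sign ω) with h | h
      · simp only [U, h, if_true, Equiv.Perm.sign_inv]
        push_cast
        rw [← hA]
        field_simp
        norm_num
      · simp [U, h]
    rw [Finset.sum_congr rfl fun ω _ => hform ω, ← Finset.mul_sum, Finset.sum_add_distrib, e0, e1]
    simp
  have hm : ∀ i, ∑ ω, F ω * (V i).character ω =
      if i ∈ Finset.univ \ {i₀, i₁} then
        (V i).character π₀ * (V i).character σ₀ / (Module.finrank ℂ (V i) : ℂ) else 0 := by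
    intro i
    have hsub : ∑ ω, F ω * (V i).character ω =
        (V i).character π₀ * (V i).character σ₀ / (Module.finrank ℂ (V i) : ℂ) -
          ∑ ω, ((U ω : ℝ) : ℂ) * (V i).character ω := by
      rw [← hP, ← Finset.sum_sub_distrib]
      refine Finset.sum_congr rfl fun ω _ => ?_
      simp only [F]
      push_cast
      ring
    rw [hsub]
    by_cases hi0 : i = i₀
    · subst hi0
      rw [if_neg (by simp), ← FDRep.char_one, h₀]
      simp [hUsum]
    by_cases hi1 : i = i₁
    · subst hi1
      have hs : ((Equiv.Perm.sign π₀ : ℤ) : ℂ) * ((Equiv.Perm.sign σ₀ : ℤ) : ℂ) = 1 := by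
        have := heven π₀ σ₀ rfl rfl
        rw [Equiv.Perm.sign_mul] at this
        rw [← Int.cast_mul, ← Units.val_mul, this]
        simp
      rw [if_neg (by simp), ← FDRep.char_one, h₁]
      simp only [hUsign, hUsum, hs]
      simp
    · rw [if_pos (by simp [hi0, hi1]), hU i hi0 hi1, sub_zero]
  -- simultaneous conjugation permutes the factorisations `ω = πσ`
  have hPconj : ∀ g h, P (h * g * h⁻¹) = P g := by
    intro g h
    simp only [P]
    congr 2
    refine Finset.card_bij (fun p _ => (h⁻¹ * p.1 * h, h⁻¹ * p.2 * h)) ?_ ?_ ?_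
    · intro p hp
      have e : ∀ x : Equiv.Perm (Fin n), (h⁻¹ * x * h).cycleType = x.cycleType := fun x => by
        simpa using Equiv.Perm.cycleType_conj (σ := x) (τ := h⁻¹)
      simp only [Ca, Cb, Finset.mem_filter, Finset.mem_product, Finset.mem_univ, true_and, e] at hp ⊢
      refine ⟨hp.1, ?_⟩
      have h2 : h⁻¹ * p.1 * h * (h⁻¹ * p.2 * h) = h⁻¹ * (p.1 * p.2) * h := by group
      rw [h2, hp.2]
      group
    · intro p _ q _ hpq
      simpa [Prod.ext_iff] using hpq
    · intro q hq
      simp only [Ca, Cb, Finset.mem_filter, Finset.mem_product, Finset.mem_univ, true_and] at hq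
      refine ⟨(h * q.1 * h⁻¹, h * q.2 * h⁻¹), ?_, ?_⟩
      · simp only [Ca, Cb, Finset.mem_filter, Finset.mem_product, Finset.mem_univ, true_and,
          Equiv.Perm.cycleType_conj]
        refine ⟨hq.1, ?_⟩
        rw [← hq.2]
        group
      · ext1 <;> group
  have hFconj : ∀ g h, F (h * g * h⁻¹) = F g := by
    intro g h
    have hs : Equiv.Perm.sign (h * g * h⁻¹) = Equiv.Perm.sign g := by
      simp [mul_comm, mul_left_comm]
    simp only [F, hPconj, U, hs]
  have hFinv : ∀ g, F g⁻¹ = F g := by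
    intro g
    obtain ⟨c, hc⟩ := isConj_iff.1
      (Equiv.Perm.isConj_iff_cycleType_eq.2 (Equiv.Perm.cycleType_inv g).symm)
    rw [← hc, hFconj]
  have hPl := card_mul_sum_mul_inv V hsimple hcomplete hdistinct F hFconj
  have hreal : (Fintype.card (Equiv.Perm (Fin n)) : ℝ) * ∑ ω, |P ω - U ω| ^ 2 ≤
      ∑ i ∈ Finset.univ \ {i₀, i₁}, ‖(V i).character π₀ * (V i).character σ₀ /
            (Module.finrank ℂ (V i) : ℂ)‖ ^ 2 := by
    have hl : (((Fintype.card (Equiv.Perm (Fin n)) : ℝ) * ∑ ω, |P ω - U ω| ^ 2 : ℝ) : ℂ) =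
        ∑ i ∈ Finset.univ \ {i₀, i₁}, ((V i).character π₀ * (V i).character σ₀ /
            (Module.finrank ℂ (V i) : ℂ)) ^ 2 := by
      have hr : ∑ i, (∑ ω, F ω * (V i).character ω) ^ 2 =
          ∑ i ∈ Finset.univ \ {i₀, i₁}, ((V i).character π₀ * (V i).character σ₀ /
            (Module.finrank ℂ (V i) : ℂ)) ^ 2 := by
        simp only [hm, ite_pow, zero_pow two_ne_zero]
        rw [Finset.sum_ite_mem, Finset.univ_inter]
      rw [← hr, ← hPl]
      simp only [sq_abs, hFinv, ← sq, F]
      push_cast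
      rfl
    have hn : (0 : ℝ) ≤ (Fintype.card (Equiv.Perm (Fin n)) : ℝ) * ∑ ω, |P ω - U ω| ^ 2 := by
      positivity
    rw [← Complex.norm_of_nonneg hn, hl]
    refine (norm_sum_le _ _).trans (le_of_eq ?_)
    simp only [norm_pow]
  have hcs := sq_sum_le_card_mul_sum_sq (s := (Finset.univ : Finset (Equiv.Perm (Fin n))))
    (f := fun ω => |P ω - U ω|)
  rw [Finset.card_univ] at hcs
  rw [mul_pow]
  linarith
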